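/- arXiv:1709.04789 — 2 statements merged into one kernel-verified Lean document; each statement's English description precedes it below -/
import Mathlib

section
/- Let σ be a simplex of Ind(G_m^d) and i ∈ {1,…,m}. If either a_i ∈ σ or σ ∪ {a_i} is a simplex of Ind(G_m^d), then there exists j ≤ i such that σ ∈ 𝒮_{a_j} = S_{a_j} ∪ μ_{a_j}(S_{a_j}). -/
open Finset

/-- The graph `G_m^d` on vertex set `Fin m ⊕ Fin m` (0-based indexing):
`Sum.inl i` is the vertex `a_{i+1}` and `Sum.inr j` is the vertex `b_{j+1}` of the paper;
`a_i` is adjacent to `b_j` iff `(j - i) mod m ∈ {0, …, d-1}`. -/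
def Gmd (m d : ℕ) : SimpleGraph (Fin m ⊕ Fin m) :=
  SimpleGraph.fromRel (fun u v =>
    ∃ i j : Fin m, u = Sum.inl i ∧ v = Sum.inr j ∧ (j.val + m - i.val) % m < d)

/-- A finite set of vertices is independent iff no two of its elements are adjacent. -/
def IsInd (m d : ℕ) (σ : Finset (Fin m ⊕ Fin m)) : Prop :=
  ∀ u ∈ σ, ∀ v ∈ σ, ¬ (Gmd m d).Adj u v

/-- The face poset `P` of the independence complex `Ind (G_m^d)` (ordered by `⊆`),
including the empty simplex. -/
def faceP (m d : ℕ) : Set (Finset (Fin m ⊕ Fin m)) := {σ | IsInd m d σ}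

/-- One step of the matching construction: `S_x(T) = {σ ∈ T | x ∉ σ, σ ∪ {x} ∈ T}`. -/
def stepS {α : Type*} [DecidableEq α] (x : α) (T : Set (Finset α)) : Set (Finset α) :=
  {σ | σ ∈ T ∧ x ∉ σ ∧ insert x σ ∈ T}

/-- The survivors of one step: `T \ (S_x(T) ∪ μ_x(S_x(T)))`. -/
def stepSurv {α : Type*} [DecidableEq α] (x : α) (T : Set (Finset α)) : Set (Finset α) :=
  T \ (stepS x T ∪ (insert x) '' (stepS x T))

/-- Iterating the matching construction along a list of vertices. -/
def phase {α : Type*} [DecidableEq α] (T : Set (Finset α)) (l : List α) : Set (Finset α) :=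
  l.foldl (fun T x => stepSurv x T) T

/-- The list `a_1, …, a_m`. -/
def listA (m : ℕ) : List (Fin m ⊕ Fin m) := (List.finRange m).map Sum.inl
/-- The list `b_1, …, b_m`. -/
def listB (m : ℕ) : List (Fin m ⊕ Fin m) := (List.finRange m).map Sum.inr

/-- `S_{a_{i+1}}` (0-based `i`): the set matched with `a_{i+1}` at stage `i+1` of phase one. -/
def Sa (m d : ℕ) (i : Fin m) : Set (Finset (Fin m ⊕ Fin m)) :=
  stepS (Sum.inl i) (phase (faceP m d) ((listA m).take i.val))

/-- `M = P \ (S_1 ∪ μ_1(S_1))`, the simplices surviving phase one. -/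
def setM (m d : ℕ) : Set (Finset (Fin m ⊕ Fin m)) := phase (faceP m d) (listA m)

/-- `S_{b_{i+1}}` (0-based `i`): the set matched with `b_{i+1}` at stage `i+1` of phase two. -/
def Sb (m d : ℕ) (i : Fin m) : Set (Finset (Fin m ⊕ Fin m)) :=
  stepS (Sum.inr i) (phase (setM m d) ((listB m).take i.val))

/-- `𝒮_{a_{i+1}} = S_{a_{i+1}} ∪ μ_{a_{i+1}}(S_{a_{i+1}})`. -/
def scriptSa (m d : ℕ) (i : Fin m) : Set (Finset (Fin m ⊕ Fin m)) :=
  Sa m d i ∪ (insert (Sum.inl i)) '' (Sa m d i)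

/-- `𝒮_{b_{i+1}} = S_{b_{i+1}} ∪ μ_{b_{i+1}}(S_{b_{i+1}})`. -/
def scriptSb (m d : ℕ) (i : Fin m) : Set (Finset (Fin m ⊕ Fin m)) :=
  Sb m d i ∪ (insert (Sum.inr i)) '' (Sb m d i)

/-- The critical cells `C = P \ (S ∪ μ(S))`. -/
def setC (m d : ℕ) : Set (Finset (Fin m ⊕ Fin m)) :=
  faceP m d \ ((⋃ i : Fin m, scriptSa m d i) ∪ (⋃ i : Fin m, scriptSb m d i))

/-- The matching relation: `MatchRel σ τ` iff `τ = μ(σ)` for `σ ∈ S = S_1 ∪ S_2`. -/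
def MatchRel (m d : ℕ) (σ τ : Finset (Fin m ⊕ Fin m)) : Prop :=
  (∃ i : Fin m, σ ∈ Sa m d i ∧ τ = insert (Sum.inl i) σ) ∨
  (∃ i : Fin m, σ ∈ Sb m d i ∧ τ = insert (Sum.inr i) σ)

/-- `B_{s+1} = {b_{s+1}, b_{s+2}, …, b_{s+m-d}}` (0-based `s`, subscripts mod `m`). -/
def Bset (m d : ℕ) (s : Fin m) : Finset (Fin m ⊕ Fin m) :=
  (Finset.univ.filter (fun j : Fin m => (j.val + m - s.val) % m < m - d)).image Sum.inr

/-- `b_{n+1} ∈ σ` (0-based subscript `n`). -/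
def hasB (m : ℕ) (σ : Finset (Fin m ⊕ Fin m)) (n : ℕ) : Prop :=
  ∃ j : Fin m, j.val = n ∧ Sum.inr j ∈ σ

/-- `σ ⊆ B`. -/
def onlyB (m : ℕ) (σ : Finset (Fin m ⊕ Fin m)) : Prop :=
  ∀ v ∈ σ, ∃ j : Fin m, v = Sum.inr j

/-- Property `P_l` of the paper, with parameter `j1` (0-based: the paper's `j_1 - 1`, so
`1 ≤ j1 ≤ d`).  With 0-based subscripts `i_r = (r-1)(d+1)`, `j_r = j1 + (r-1)(d+1)` and
`k = m + j1 - (d+1)`:  σ ∈ M, σ ⊆ B, the `2l` smallest subscripts of σ are exactly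
`0 = i_1, j_1, i_2, j_2, …, i_l, j_l`, the largest subscript is `k`, and
`σ \ {b_{i_r}} ∉ M`, `σ \ {b_{j_r}} ∉ M` for all `1 ≤ r ≤ l`. -/
def propP (m d l j1 : ℕ) (σ : Finset (Fin m ⊕ Fin m)) : Prop :=
  σ ∈ setM m d ∧ onlyB m σ ∧ 1 ≤ j1 ∧ j1 ≤ d ∧
  (∀ r, 1 ≤ r → r ≤ l → hasB m σ ((r-1)*(d+1)) ∧ hasB m σ (j1 + (r-1)*(d+1))) ∧
  (∀ j : Fin m, Sum.inr j ∈ σ → j.val ≤ j1 + (l-1)*(d+1) →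
      ∃ r, 1 ≤ r ∧ r ≤ l ∧ (j.val = (r-1)*(d+1) ∨ j.val = j1 + (r-1)*(d+1))) ∧
  hasB m σ (m + j1 - (d+1)) ∧
  (∀ j : Fin m, Sum.inr j ∈ σ → j.val ≤ m + j1 - (d+1)) ∧
  (∀ r, 1 ≤ r → r ≤ l → ∀ j : Fin m,
      (j.val = (r-1)*(d+1) ∨ j.val = j1 + (r-1)*(d+1)) → σ.erase (Sum.inr j) ∉ setM m d)

lemma aux_down {m d : ℕ} {σ τ : Finset (Fin m ⊕ Fin m)} (h : σ ⊆ τ) (ht : τ ∈ faceP m d) :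
    σ ∈ faceP m d := fun u hu v hv => ht u (h hu) v (h hv)

lemma aux_nadj (m d : ℕ) (i j : Fin m) : ¬ (Gmd m d).Adj (Sum.inl i) (Sum.inl j) := by
  simp [Gmd, SimpleGraph.fromRel_adj]

lemma aux_exch {m d : ℕ} {σ : Finset (Fin m ⊕ Fin m)} (i j : Fin m) (hσ : σ ∈ faceP m d)
    (h : insert (Sum.inl i) (σ.erase (Sum.inl j)) ∈ faceP m d) :
    insert (Sum.inl i) σ ∈ faceP m d := by
  have key : ∀ v ∈ σ, ¬ (Gmd m d).Adj (Sum.inl i) v := by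
    intro v hv
    by_cases hvj : v = Sum.inl j
    · subst hvj
      exact aux_nadj m d i j
    · exact h _ (by simp) _ (by simp [hvj, hv])
  intro u hu v hv
  rw [Finset.mem_insert] at hu hv
  rcases hu with rfl | hu <;> rcases hv with rfl | hv
  · exact aux_nadj m d i i
  · exact key v hv
  · exact fun hh => key u hu hh.symm
  · exact hσ u hu v hv

/-- The explicit description of the survivors of the first `n` stages. -/
def auxT (m d n : ℕ) : Set (Finset (Fin m ⊕ Fin m)) :=
  {σ | σ ∈ faceP m d ∧ ∀ k : Fin m, k.val < n → insert (Sum.inl k) σ ∉ faceP m d}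

lemma aux_removed {m d : ℕ} (i : Fin m) {σ : Finset (Fin m ⊕ Fin m)}
    (hσ : σ ∈ auxT m d i.val) (h : insert (Sum.inl i) σ ∈ faceP m d) :
    σ ∈ stepS (Sum.inl i) (auxT m d i.val) ∪
      (insert (Sum.inl i)) '' (stepS (Sum.inl i) (auxT m d i.val)) := by
  by_cases hi : Sum.inl i ∈ σ
  · right
    refine ⟨σ.erase (Sum.inl i), ⟨⟨aux_down (Finset.erase_subset _ _) hσ.1, ?_⟩, by simp, ?_⟩,
      Finset.insert_erase hi⟩
    · intro k hk hh
      exact hσ.2 k hk (aux_exch k i hσ.1 hh)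
    · rwa [Finset.insert_erase hi]
  · left
    refine ⟨hσ, hi, h, ?_⟩
    intro k hk hh
    exact hσ.2 k hk (aux_down (Finset.insert_subset_insert _ (Finset.subset_insert _ _)) hh)

lemma aux_step {m d : ℕ} (i : Fin m) :
    stepSurv (Sum.inl i) (auxT m d i.val) = auxT m d (i.val + 1) := by
  ext σ
  constructor
  · rintro ⟨hσ, hn⟩
    refine ⟨hσ.1, fun k hk hh => ?_⟩
    rcases Nat.lt_succ_iff_lt_or_eq.mp hk with hk | hk
    · exact hσ.2 k hk hh
    · obtain rfl := Fin.ext hk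
      exact hn (aux_removed k hσ hh)
  · intro hσ
    refine ⟨⟨hσ.1, fun k hk => hσ.2 k (by omega)⟩, ?_⟩
    rintro (hs | ⟨τ, hs, rfl⟩)
    · exact hσ.2 i (by omega) hs.2.2.1
    · apply hσ.2 i (by omega)
      rw [Finset.insert_idem]
      exact hs.2.2.1

lemma aux_phase (m d n : ℕ) (hn : n ≤ m) :
    phase (faceP m d) ((listA m).take n) = auxT m d n := by
  induction n with
  | zero => simp [phase, auxT]
  | succ n ih =>
    have hl : n < (listA m).length := by simp [listA]; omega
    have hg : (listA m)[n] = Sum.inl ⟨n, hn⟩ := by simp [listA]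
    rw [← List.take_concat_get' _ _ hl, hg]
    have := ih (by omega)
    unfold phase at this ⊢
    rw [List.foldl_append, this]
    exact aux_step (d := d) (⟨n, hn⟩ : Fin m)

/-- if `σ` is a simplex of `Ind(G_m^d)` and either `a_i ∈ σ` or
`σ ∪ {a_i}` is a simplex, then `σ ∈ 𝒮_{a_j} = S_{a_j} ∪ μ_{a_j}(S_{a_j})` for some `j ≤ i`. -/
theorem stmt1 (m d : ℕ) (hd : 1 ≤ d) (hdm : d ≤ m)
    (σ : Finset (Fin m ⊕ Fin m)) (hσ : σ ∈ faceP m d) (i : Fin m)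
    (h : Sum.inl i ∈ σ ∨ insert (Sum.inl i) σ ∈ faceP m d) :
    ∃ j : Fin m, j ≤ i ∧ σ ∈ scriptSa m d j := by
  have h' : insert (Sum.inl i) σ ∈ faceP m d := by
    rcases h with h | h
    · rwa [Finset.insert_eq_of_mem h]
    · exact h
  clear h
  induction hn : i.val using Nat.strong_induction_on generalizing i with
  | _ n ih =>
    subst hn
    by_cases hc : ∃ k : Fin m, k.val < i.val ∧ insert (Sum.inl k) σ ∈ faceP m d
    · obtain ⟨k, hk, hkσ⟩ := hc
      obtain ⟨j, hj, hjσ⟩ := ih k.val hk k hkσ rfl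
      exact ⟨j, hj.trans (le_of_lt hk), hjσ⟩
    · refine ⟨i, le_refl _, ?_⟩
      unfold scriptSa Sa
      rw [aux_phase m d i.val i.isLt.le]
      exact aux_removed i ⟨hσ, fun k hk hh => hc ⟨k, hk, hh⟩⟩ h'
end

section
/- Let σ = {b_{1}, b_{j_2}, …, b_k} ⊆ B with subscripts 1 < j_2 < … < k ≤ m, and suppose σ ∈ M. Then σ ∉ 𝒮_{b_i} for all i ∈ {1,…,d+1} if and only if the following four conditions hold: (1) j_2 ≤ d+1; (2) σ \ {b_1} ∉ M; (3) k = j_2 + m − d − 1; and (4) σ \ {b_{j_2}} ∉ M. -/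
open Finset

/-! ### Generic facts on the matching construction -/

theorem mem_stepSurv {α : Type*} [DecidableEq α] (x : α) (T : Set (Finset α)) (σ : Finset α) :
    σ ∈ stepSurv x T ↔ σ ∈ T ∧ ¬ (x ∉ σ ∧ insert x σ ∈ T) ∧ ¬ (x ∈ σ ∧ σ.erase x ∈ T) := by
  unfold stepSurv stepS
  constructor
  · rintro ⟨h1, h2⟩
    refine ⟨h1, fun h => h2 (Or.inl ⟨h1, h.1, h.2⟩), fun h => h2 (Or.inr ⟨σ.erase x, ⟨h.2, ?_, ?_⟩, ?_⟩)⟩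
    · simp
    · rw [Finset.insert_erase h.1]; exact h1
    · exact Finset.insert_erase h.1
  · rintro ⟨h1, h2, h3⟩
    refine ⟨h1, ?_⟩
    rintro (h | ⟨τ, ⟨ht, hx, hi⟩, rfl⟩)
    · exact h2 ⟨h.2.1, h.2.2⟩
    · apply h3
      refine ⟨Finset.mem_insert_self _ _, ?_⟩
      rw [Finset.erase_insert hx]; exact ht

theorem phase_take_succ {α : Type*} [DecidableEq α] (T : Set (Finset α)) (l : List α) (n : ℕ)
    (h : n < l.length) :
    phase T (l.take (n+1)) = stepSurv (l[n]) (phase T (l.take n)) := by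
  unfold phase
  rw [List.take_succ_eq_append_getElem h, List.foldl_append]
  rfl

theorem phaseA_succ {m : ℕ} (T : Set (Finset (Fin m ⊕ Fin m))) (i : Fin m) :
    phase T ((listA m).take (i.val+1)) = stepSurv (Sum.inl i) (phase T ((listA m).take i.val)) := by
  rw [phase_take_succ T (listA m) i.val (by simp [listA])]
  simp [listA]

theorem phaseB_succ {m : ℕ} (T : Set (Finset (Fin m ⊕ Fin m))) (i : Fin m) :
    phase T ((listB m).take (i.val+1)) = stepSurv (Sum.inr i) (phase T ((listB m).take i.val)) := by
  rw [phase_take_succ T (listB m) i.val (by simp [listB])]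
  simp [listB]

theorem mem_phaseB {m d : ℕ} (n : ℕ) (hn : n ≤ m) (σ : Finset (Fin m ⊕ Fin m)) :
    σ ∈ phase (setM m d) ((listB m).take n) ↔
      σ ∈ setM m d ∧ ∀ i : Fin m, i.val < n → σ ∉ scriptSb m d i := by
  induction n with
  | zero => simp [phase]
  | succ n ih =>
    have := phaseB_succ (setM m d) ⟨n, hn⟩
    simp only at this
    rw [this]
    have e : stepSurv (Sum.inr ⟨n, hn⟩) (phase (setM m d) ((listB m).take n)) =
      phase (setM m d) ((listB m).take n) \ scriptSb m d ⟨n, hn⟩ := rfl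
    rw [e, Set.mem_sdiff, ih (by omega)]
    constructor
    · rintro ⟨⟨h1, h2⟩, h3⟩
      refine ⟨h1, fun i hi => ?_⟩
      rcases Nat.lt_succ_iff_lt_or_eq.mp hi with h | h
      · exact h2 i h
      · have : i = ⟨n, hn⟩ := Fin.ext h
        rw [this]; exact h3
    · rintro ⟨h1, h2⟩
      exact ⟨⟨h1, fun i hi => h2 i (by omega)⟩, h2 _ (by simp)⟩

/-! ### Phase one -/

theorem adj_lr {m d : ℕ} (i j : Fin m) :
    (Gmd m d).Adj (Sum.inl i) (Sum.inr j) ↔ (j.val + m - i.val) % m < d := by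
  simp [Gmd, SimpleGraph.fromRel_adj]

theorem adj_rl {m d : ℕ} (i j : Fin m) :
    (Gmd m d).Adj (Sum.inr j) (Sum.inl i) ↔ (j.val + m - i.val) % m < d := by
  rw [SimpleGraph.adj_comm, adj_lr]

theorem adj_ll {m d : ℕ} (i j : Fin m) : ¬ (Gmd m d).Adj (Sum.inl i) (Sum.inl j) := by
  simp [Gmd, SimpleGraph.fromRel_adj]

theorem adj_rr {m d : ℕ} (i j : Fin m) : ¬ (Gmd m d).Adj (Sum.inr i) (Sum.inr j) := by
  simp [Gmd, SimpleGraph.fromRel_adj]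

theorem isInd_iff {m d : ℕ} (σ : Finset (Fin m ⊕ Fin m)) :
    IsInd m d σ ↔ ∀ i j, Sum.inl i ∈ σ → Sum.inr j ∈ σ → ¬ (j.val + m - i.val) % m < d := by
  constructor
  · intro h i j hi hj
    rw [← adj_lr]; exact h _ hi _ hj
  · rintro h (i | i) hi (j | j) hj
    · exact adj_ll i j
    · rw [adj_lr]; exact h _ _ hi hj
    · rw [adj_rl]; exact h _ _ hj hi
    · exact adj_rr i j

theorem isInd_insert {m d : ℕ} (σ : Finset (Fin m ⊕ Fin m)) (i : Fin m) :
    IsInd m d (insert (Sum.inl i) σ) ↔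
      IsInd m d σ ∧ ∀ j, Sum.inr j ∈ σ → ¬ (j.val + m - i.val) % m < d := by
  simp only [isInd_iff, Finset.mem_insert]
  constructor
  · intro h
    exact ⟨fun a b ha hb => h a b (Or.inr ha) (Or.inr hb), fun j hj => h i j (Or.inl rfl) (Or.inr hj)⟩
  · rintro ⟨h1, h2⟩ a b (ha | ha) (hb | hb)
    · simp at hb
    · rw [Sum.inl.injEq] at ha; subst ha; exact h2 b hb
    · simp at hb
    · exact h1 a b ha hb

theorem mem_phaseA {m d : ℕ} (n : ℕ) (hn : n ≤ m) (σ : Finset (Fin m ⊕ Fin m)) :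
    σ ∈ phase (faceP m d) ((listA m).take n) ↔
      IsInd m d σ ∧ ∀ i : Fin m, i.val < n → ∃ j, Sum.inr j ∈ σ ∧ (j.val + m - i.val) % m < d := by
  induction n generalizing σ with
  | zero => simp [phase, faceP]
  | succ n ih =>
    have := phaseA_succ (faceP m d) ⟨n, hn⟩
    simp only at this
    rw [this, mem_stepSurv]
    simp only [ih (by omega)]
    set x : Fin m := ⟨n, hn⟩ with hx
    rw [isInd_insert]
    constructor
    · rintro ⟨⟨h1, h2⟩, h3, h4⟩
      refine ⟨h1, fun i hi => ?_⟩
      rcases Nat.lt_succ_iff_lt_or_eq.mp hi with h | h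
      · exact h2 i h
      · have : i = x := Fin.ext h
        rw [this]
        by_contra hc
        push Not at hc
        by_cases hm : Sum.inl x ∈ σ
        · apply h4
          refine ⟨hm, ?_, ?_⟩
          · rw [isInd_iff] at h1 ⊢
            intro a b ha hb
            exact h1 a b (Finset.mem_of_mem_erase ha) (Finset.mem_of_mem_erase hb)
          · intro i' hi'
            obtain ⟨j, hj, hj'⟩ := h2 i' hi'
            exact ⟨j, by simp [hj], hj'⟩
        · apply h3
          refine ⟨hm, ⟨h1, fun j hj => by have := hc j hj; omega⟩, ?_⟩
          intro i' hi'
          obtain ⟨j, hj, hj'⟩ := h2 i' hi'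
          exact ⟨j, by simp [hj], hj'⟩
    · rintro ⟨h1, h2⟩
      obtain ⟨j, hj, hj'⟩ := h2 x (by simp [hx])
      refine ⟨⟨h1, fun i hi => h2 i (by omega)⟩, ?_, ?_⟩
      · rintro ⟨-, ⟨-, h⟩, -⟩
        exact h j hj hj'
      · rintro ⟨h, -⟩
        rw [isInd_iff] at h1
        exact (h1 x j h hj) (by exact hj')

/-- All cyclic windows of length `d` are hit by `p`. -/
def Win (m d : ℕ) (p : ℕ → Prop) : Prop :=
  ∀ w, w < m → ∃ j, p j ∧ ((w ≤ j ∧ j < w + d) ∨ j + m < w + d)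

theorem mod_win {m d i j : ℕ} (hi : i < m) (hj : j < m) (hdm : d ≤ m) :
    (j + m - i) % m < d ↔ ((i ≤ j ∧ j < i + d) ∨ j + m < i + d) := by
  by_cases h : i ≤ j
  · have : j + m - i = (j - i) + m := by omega
    rw [this, Nat.add_mod_right, Nat.mod_eq_of_lt (by omega)]; omega
  · rw [Nat.mod_eq_of_lt (by omega)]; omega

theorem mem_setM {m d : ℕ} (hdm : d ≤ m) (σ : Finset (Fin m ⊕ Fin m)) :
    σ ∈ setM m d ↔ onlyB m σ ∧ Win m d (hasB m σ) := by
  have e : setM m d = phase (faceP m d) ((listA m).take m) := by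
    rw [List.take_of_length_le (by simp [listA])]; rfl
  rw [e, mem_phaseA m le_rfl]
  constructor
  · rintro ⟨h1, h2⟩
    constructor
    · rintro (i | j) hv
      · obtain ⟨j, hj, hj'⟩ := h2 i i.2
        rw [isInd_iff] at h1
        exact absurd hj' (h1 i j hv hj)
      · exact ⟨j, rfl⟩
    · intro w hw
      obtain ⟨j, hj, hj'⟩ := h2 ⟨w, hw⟩ hw
      exact ⟨j, ⟨j, rfl, hj⟩, (mod_win hw j.2 hdm).1 hj'⟩
  · rintro ⟨h1, h2⟩
    constructor
    · rw [isInd_iff]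
      intro i j hi _
      obtain ⟨j', h⟩ := h1 _ hi
      simp at h
    · intro i _
      obtain ⟨_, ⟨j, rfl, hj⟩, hj'⟩ := h2 i i.2
      exact ⟨j, hj, (mod_win i.2 j.2 hdm).2 hj'⟩

theorem hasB_insert {m : ℕ} (σ : Finset (Fin m ⊕ Fin m)) (i : Fin m) :
    hasB m (insert (Sum.inr i) σ) = fun n => n = i.val ∨ hasB m σ n := by
  funext n
  apply propext
  simp only [hasB, Finset.mem_insert, Sum.inr.injEq]
  constructor
  · rintro ⟨j, rfl, rfl | h⟩
    · exact Or.inl rfl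
    · exact Or.inr ⟨j, rfl, h⟩
  · rintro (rfl | ⟨j, rfl, h⟩)
    · exact ⟨i, rfl, Or.inl rfl⟩
    · exact ⟨j, rfl, Or.inr h⟩

theorem hasB_erase {m : ℕ} (σ : Finset (Fin m ⊕ Fin m)) (i : Fin m) :
    hasB m (σ.erase (Sum.inr i)) = fun n => n ≠ i.val ∧ hasB m σ n := by
  funext n
  apply propext
  simp only [hasB, Finset.mem_erase, ne_eq, Sum.inr.injEq]
  constructor
  · rintro ⟨j, rfl, h1, h⟩
    exact ⟨fun h => h1 (Fin.ext h), j, rfl, h⟩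
  · rintro ⟨h1, j, rfl, h⟩
    exact ⟨j, rfl, fun h => h1 (by rw [h]), h⟩

theorem hasB_iff {m : ℕ} (σ : Finset (Fin m ⊕ Fin m)) (i : Fin m) :
    hasB m σ i.val ↔ Sum.inr i ∈ σ := by
  constructor
  · rintro ⟨j, h, hj⟩
    rwa [← Fin.ext h]
  · exact fun h => ⟨i, rfl, h⟩

theorem onlyB_insert {m : ℕ} {σ : Finset (Fin m ⊕ Fin m)} (h : onlyB m σ) (i : Fin m) :
    onlyB m (insert (Sum.inr i) σ) := by
  intro v hv
  rcases Finset.mem_insert.1 hv with rfl | hv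
  · exact ⟨i, rfl⟩
  · exact h v hv

theorem onlyB_erase {m : ℕ} {σ : Finset (Fin m ⊕ Fin m)} (h : onlyB m σ) (i : Fin m) :
    onlyB m (σ.erase (Sum.inr i)) := fun v hv => h v (Finset.mem_of_mem_erase hv)

/-! ### Combinatorics of windows -/

theorem Win.mono {m d : ℕ} {p q : ℕ → Prop} (h : Win m d p) (hpq : ∀ n, p n → q n) :
    Win m d q := fun w hw => by
  obtain ⟨j, hj, hwin⟩ := h w hw
  exact ⟨j, hpq j hj, hwin⟩

/-- Removing `0` is harmless if the resulting gap is at most `d`. -/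
theorem win_del_zero {m d : ℕ} {p : ℕ → Prop} (hp : ∀ n, p n → n < m) (h : Win m d p) {j k : ℕ}
    (hj : p j) (hj0 : 0 < j) (hk : p k) (hk0 : 0 < k) (hjk : m + j ≤ k + d) :
    Win m d (fun n => n ≠ 0 ∧ p n) := by
  intro w hw
  obtain ⟨l, hl, hwin⟩ := h w hw
  have := hp j hj
  have := hp k hk
  by_cases hl0 : l = 0
  · subst hl0
    by_cases hwk : w ≤ k ∧ k < w + d
    · exact ⟨k, ⟨by omega, hk⟩, Or.inl hwk⟩
    · exact ⟨j, ⟨by omega, hj⟩, by omega⟩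
  · exact ⟨l, ⟨hl0, hl⟩, hwin⟩

/-- Removing `0` is harmful if the resulting gap is more than `d`. -/
theorem not_win_del_zero {m d : ℕ} {p : ℕ → Prop} (hp : ∀ n, p n → n < m) (hm : 0 < m) {j k : ℕ}
    (hj : ∀ n, p n → n = 0 ∨ j ≤ n) (hk : ∀ n, p n → n ≤ k) (hkm : k < m)
    (hjk : k + d < m + j) :
    ¬ Win m d (fun n => n ≠ 0 ∧ p n) := by
  intro h
  by_cases hc : k + 1 < m
  · obtain ⟨l, ⟨hl0, hl⟩, hwin⟩ := h (k+1) hc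
    have := hj l hl
    have := hk l hl
    omega
  · obtain ⟨l, ⟨hl0, hl⟩, hwin⟩ := h 0 hm
    have := hj l hl
    have := hk l hl
    omega

theorem win_del_mid {m d : ℕ} {p : ℕ → Prop} (h : Win m d p) (h0 : p 0) {j i : ℕ}
    (hj0 : 0 < j) (hji : j < i) (hid : i ≤ d) (hi : p i) (him : i < m) :
    Win m d (fun n => n ≠ j ∧ p n) := by
  intro w hw
  obtain ⟨l, hl, hwin⟩ := h w hw
  by_cases hlj : l = j
  · subst hlj
    by_cases hz : w = 0 ∨ m < w + d
    · exact ⟨0, ⟨by omega, h0⟩, by omega⟩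
    · exact ⟨i, ⟨by omega, hi⟩, by omega⟩
  · exact ⟨l, ⟨hlj, hl⟩, hwin⟩

/-- The explicit description of the survivors after the stages `0, …, i-1` of phase two. -/
def Q (m d i : ℕ) (p : ℕ → Prop) : Prop :=
  Win m d p ∧ p 0 ∧ ¬ Win m d (fun n => n ≠ 0 ∧ p n) ∧
  ((∃ j, p j ∧ 0 < j ∧ j < i ∧ (∀ n, p n → n = 0 ∨ j ≤ n) ∧ (∃ k, p k ∧ k + d + 1 = m + j) ∧
      ¬ Win m d (fun n => n ≠ j ∧ p n)) ∨
   ((∀ n, p n → n = 0 ∨ i ≤ n) ∧ ∃ k, p k ∧ m + i ≤ k + d + 1))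

theorem Q_one {m d : ℕ} (hdm : d < m) (p : ℕ → Prop) :
    Q m d 1 p ↔ Win m d p ∧ p 0 ∧ ¬ Win m d (fun n => n ≠ 0 ∧ p n) := by
  constructor
  · rintro ⟨h1, h2, h3, -⟩; exact ⟨h1, h2, h3⟩
  · rintro ⟨h1, h2, h3⟩
    refine ⟨h1, h2, h3, Or.inr ⟨fun n _ => by omega, ?_⟩⟩
    obtain ⟨k, hk, h⟩ := h1 (m - d) (by by_contra h; have : d = 0 := by omega
                                        subst this
                                        obtain ⟨j, _, h⟩ := h1 0 (by omega)
                                        omega)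
    exact ⟨k, hk, by omega⟩

theorem Q_step {m d i : ℕ} (hdm : d < m) (hi : 1 ≤ i) (hid : i ≤ d) (p : ℕ → Prop)
    (hp : ∀ n, p n → n < m) :
    Q m d (i+1) p ↔ Q m d i p ∧ ¬ (¬ p i ∧ Q m d i (fun n => n = i ∨ p n)) ∧
      ¬ (p i ∧ Q m d i (fun n => n ≠ i ∧ p n)) := by
  have him : i < m := by omega
  constructor
  · rintro ⟨hW, h0, hW0, ⟨j, hj, hj0, hji, hmin, ⟨k, hk, hkj⟩, hWj⟩ | ⟨hmin, k, hk, hki⟩⟩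
    · by_cases hjj : j = i
      · subst hjj
        refine ⟨⟨hW, h0, hW0, Or.inr ⟨hmin, k, hk, by omega⟩⟩, fun h => h.1 hj, ?_⟩
        rintro ⟨-, h, -⟩
        exact hWj h
      · have hpi : ¬ p i := fun h => hWj (win_del_mid hW h0 hj0 (by omega) hid h him)
        refine ⟨⟨hW, h0, hW0, Or.inl ⟨j, hj, hj0, by omega, hmin, ⟨k, hk, hkj⟩, hWj⟩⟩, ?_,
          fun h => hpi h.1⟩
        rintro ⟨-, hW', h0', -, ⟨j', hj', hj'0, hj'i, hmin', -, hWj'⟩ | ⟨hmin', -⟩⟩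
        · have : j' = j := by
            have := hmin' j (Or.inr hj)
            rcases hj' with h | h
            · omega
            · have := hmin j' h; omega
          subst this
          exact hWj' (win_del_mid hW' h0' hj0 (by omega) hid (Or.inl rfl) him)
        · have := hmin' j (Or.inr hj); omega
    · have hpi : ¬ p i := fun h => by have := hmin i h; omega
      refine ⟨⟨hW, h0, hW0, Or.inr ⟨fun n hn => by have := hmin n hn; omega, k, hk, by omega⟩⟩, ?_,
          fun h => hpi h.1⟩
      rintro ⟨-, hW', -, h, -⟩
      refine h (win_del_zero ?_ hW' (Or.inl rfl) (by omega) (Or.inr hk) (by omega) (by omega))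
      rintro n (rfl | hn)
      · exact him
      · exact hp n hn
  · rintro ⟨⟨hW, h0, hW0, ⟨j, hj, hj0, hji, hmin, ⟨k, hk, hkj⟩, hWj⟩ | ⟨hmin, k, hk, hki⟩⟩, hI, hE⟩
    · exact ⟨hW, h0, hW0, Or.inl ⟨j, hj, hj0, by omega, hmin, ⟨k, hk, hkj⟩, hWj⟩⟩
    · by_cases hpi : p i
      · have hkk : k + d + 1 = m + i := by
          by_contra hc
          exact hW0 (win_del_zero hp hW hpi (by omega) hk (by omega) (by omega))
        refine ⟨hW, h0, hW0, Or.inl ⟨i, hpi, by omega, by omega, hmin, ⟨k, hk, hkk⟩, ?_⟩⟩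
        intro hWi
        apply hE
        refine ⟨hpi, hWi, ⟨by omega, h0⟩, ?_, Or.inr ⟨fun n hn => hmin n hn.2, ?_⟩⟩
        · intro h
          exact hW0 (h.mono fun n hn => ⟨hn.1, hn.2.2⟩)
        · by_cases hki' : k = i
          · exfalso
            subst hki'
            obtain ⟨l, ⟨hli, hl⟩, hwin⟩ := hWi 1 (by omega)
            have := hmin l hl
            have := hp l hl
            exact hW0 (win_del_zero hp hW hpi (by omega) hl (by omega) (by omega))
          · exact ⟨k, ⟨hki', hk⟩, by omega⟩
      · refine ⟨hW, h0, hW0, Or.inr ⟨fun n hn => ?_, ?_⟩⟩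
        · have := hmin n hn
          rcases this with h | h
          · exact Or.inl h
          · rcases Nat.lt_or_eq_of_le h with h | h
            · exact Or.inr h
            · subst h; exact absurd hn hpi
        · by_contra hc
          push Not at hc
          apply hI
          refine ⟨hpi, hW.mono fun n hn => Or.inr hn, Or.inr h0, ?_, Or.inr ⟨?_, k, Or.inr hk, hki⟩⟩
          · have := hp k hk
            apply not_win_del_zero (j := i) (k := k) _ (by omega) _ _ (by omega)
            · have := hc k hk; omega
            · rintro n (rfl | hn)
              · exact him
              · exact hp n hn
            · rintro n (rfl | hn)
              · omega
              · exact hmin n hn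
            · rintro n (rfl | hn)
              · omega
              · have := hc n hn; omega
          · rintro n (rfl | hn)
            · omega
            · exact hmin n hn

theorem hasB_lt {m : ℕ} (σ : Finset (Fin m ⊕ Fin m)) (n : ℕ) (h : hasB m σ n) : n < m := by
  obtain ⟨j, rfl, -⟩ := h
  exact j.2

theorem onlyB_of_insert {m : ℕ} {σ : Finset (Fin m ⊕ Fin m)} {i : Fin m}
    (h : onlyB m (insert (Sum.inr i) σ)) : onlyB m σ :=
  fun v hv => h v (Finset.mem_insert_of_mem hv)

theorem mem_phaseB_Q {m d : ℕ} (hdm : d < m) (n : ℕ) (hn : n ≤ d)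
    (σ : Finset (Fin m ⊕ Fin m)) (hB : onlyB m σ) :
    σ ∈ phase (setM m d) ((listB m).take (n+1)) ↔ Q m d (n+1) (hasB m σ) := by
  induction n generalizing σ with
  | zero =>
    have := phaseB_succ (setM m d) ⟨0, by omega⟩
    simp only at this
    rw [this, mem_stepSurv, Q_one hdm]
    simp only [List.take_zero, phase, List.foldl_nil]
    rw [mem_setM hdm.le, mem_setM hdm.le, mem_setM hdm.le, hasB_insert, hasB_erase, ← hasB_iff]
    simp only [hB, onlyB_insert hB, onlyB_erase hB, true_and]
    constructor
    · rintro ⟨h1, h2, h3⟩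
      have h0 : hasB m σ 0 := by
        by_contra hc
        exact h2 ⟨hc, h1.mono fun n hn => Or.inr hn⟩
      exact ⟨h1, h0, fun h => h3 ⟨h0, h⟩⟩
    · rintro ⟨h1, h2, h3⟩
      exact ⟨h1, fun h => h.1 h2, fun h => h3 h.2⟩
  | succ n ih =>
    have := phaseB_succ (setM m d) ⟨n+1, by omega⟩
    simp only at this
    rw [this, mem_stepSurv, ih (by omega) σ hB, ih (by omega) _ (onlyB_insert hB _),
      ih (by omega) _ (onlyB_erase hB _), hasB_insert, hasB_erase, ← hasB_iff,
      Q_step hdm (by omega) hn _ (hasB_lt σ)]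

/-- 0-based indices: let `σ = {b_0, b_{j2}, …, b_k} ∈ M` (with `0 < j2` the
second-smallest and `k` the largest subscript).  Then `σ ∉ 𝒮_{b_i}` for all `i ≤ d`
iff (1) `j2 ≤ d`, (2) `σ \ {b_0} ∉ M`, (3) `k = j2 + m - d - 1` and (4) `σ \ {b_{j2}} ∉ M`. -/
theorem stmt10 (m d : ℕ) (hd : 1 ≤ d) (hdm : d ≤ m)
    (σ : Finset (Fin m ⊕ Fin m)) (hB : onlyB m σ) (hM : σ ∈ setM m d)
    (j2 k : ℕ)
    (h0 : hasB m σ 0)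
    (hj2mem : hasB m σ j2) (hj2pos : 0 < j2)
    (hj2min : ∀ j : Fin m, Sum.inr j ∈ σ → j.val = 0 ∨ j2 ≤ j.val)
    (hkmem : hasB m σ k)
    (hkmax : ∀ j : Fin m, Sum.inr j ∈ σ → j.val ≤ k) :
    (∀ i : Fin m, i.val ≤ d → σ ∉ scriptSb m d i) ↔
      (j2 ≤ d ∧
       (∀ j0 : Fin m, j0.val = 0 → σ.erase (Sum.inr j0) ∉ setM m d) ∧
       k = j2 + m - d - 1 ∧
       (∀ jj : Fin m, jj.val = j2 → σ.erase (Sum.inr jj) ∉ setM m d)) := by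
  have hM' := (mem_setM hdm σ).1 hM
  obtain ⟨-, hW⟩ := hM'
  have hp := hasB_lt σ
  have hmin : ∀ n, hasB m σ n → n = 0 ∨ j2 ≤ n := by
    rintro _ ⟨j, rfl, hj⟩; exact hj2min j hj
  have hmax : ∀ n, hasB m σ n → n ≤ k := by
    rintro _ ⟨j, rfl, hj⟩; exact hkmax j hj
  have hj2m := hp _ hj2mem
  have hkm := hp _ hkmem
  have hk2 := hmax _ hj2mem
  have er : ∀ x : ℕ, (∀ j : Fin m, j.val = x → σ.erase (Sum.inr j) ∉ setM m d) ↔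
      (x < m → ¬ Win m d (fun n => n ≠ x ∧ hasB m σ n)) := by
    intro x
    constructor
    · intro h hx hw
      apply h ⟨x, hx⟩ rfl
      rw [mem_setM hdm, hasB_erase]
      exact ⟨onlyB_erase hB _, hw⟩
    · rintro h j rfl hj
      rw [mem_setM hdm, hasB_erase] at hj
      exact h j.2 hj.2
  rw [er, er]
  rcases Nat.lt_or_eq_of_le hdm with hlt | heq
  · have key : (∀ i : Fin m, i.val ≤ d → σ ∉ scriptSb m d i) ↔ Q m d (d+1) (hasB m σ) := by
      rw [← mem_phaseB_Q hlt d le_rfl σ hB, mem_phaseB (d+1) hlt]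
      simp only [hM, true_and, Nat.lt_succ_iff]
    rw [key]
    have hj2d : j2 ≤ d := by
      obtain ⟨l, hl, hwin⟩ := hW 1 (by omega)
      have := hmin l hl
      have := hp l hl
      omega
    constructor
    · rintro ⟨-, -, hW0, ⟨j, hj, hj0, hji, hm', ⟨k', hk', hkj⟩, hWj⟩ | ⟨hm', -⟩⟩
      · have hjj : j = j2 := by
          have := hm' _ hj2mem
          have := hmin _ hj
          omega
        subst hjj
        refine ⟨hj2d, fun _ => hW0, ?_, fun _ => hWj⟩
        have := hmax _ hk'
        by_contra hc
        exact hW0 (win_del_zero hp hW hj2mem hj2pos hkmem (by omega) (by omega))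
      · have := hm' _ hj2mem; omega
    · rintro ⟨-, hW0, hk, hWj⟩
      exact ⟨hW, h0, hW0 (by omega), Or.inl ⟨j2, hj2mem, hj2pos, by omega, hmin,
        ⟨k, hkmem, by omega⟩, hWj hj2m⟩⟩
  · subst heq
    have hW0 : Win d d (fun n => n ≠ 0 ∧ hasB d σ n) :=
      win_del_zero hp hW hj2mem hj2pos hkmem (by omega) (by omega)
    constructor
    · intro h
      exfalso
      refine h ⟨0, by omega⟩ (by simp) (Or.inr ⟨σ.erase (Sum.inr ⟨0, by omega⟩), ⟨?_, ?_, ?_⟩, ?_⟩)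
      · simp only [List.take_zero, phase, List.foldl_nil]
        rw [mem_setM hdm, hasB_erase]
        exact ⟨onlyB_erase hB _, hW0⟩
      · simp
      · rw [Finset.insert_erase ((hasB_iff σ _).1 h0)]
        simpa only [List.take_zero, phase, List.foldl_nil] using hM
      · exact Finset.insert_erase ((hasB_iff σ _).1 h0)
    · rintro ⟨-, h, -⟩
      exact absurd hW0 (h (by omega))
end
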